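/- (Extended validity of the RBBG formula, lower branch.) Let p* := (−1 + √(2√3) − √3)/2. For every real p with p* < p < 1, one has ₂F₁(1/3, 2/3; 1; β(p)) = γ(p) · ₂F₁(1/2, 1/2; 1; α(p)). (For such p one has −1 < α(p) < 1 and 0 ≤ β(p) < 1, so both hypergeometric series converge absolutely.) -/

import Mathlib

/-!
A hypergeometric function with `a + b = 1` and `c = 1` solves the Sturm–Liouville equation
`(z (1 - z) y')' = a b y`. Substituting `z = β p`, respectively `z = α p` together with the factor
`γ p`, turns the equations of both sides into one and the same equation `(P y')' = Q y` in `p`,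
where `P` vanishes at `p = 0`. Hence `P` times the Wronskian of the two sides is constant equal to
`0`, so their quotient is constant, and its value at `p = 0` is `1`. Convergence on the whole
interval holds because `p*` is the larger real root of `p⁴ + 2 p³ + 2 p + 1`, that is, of
`α p = -1`.
-/

open Real

/-- Gauss hypergeometric function ₂F₁ defined via its power series
    (the tsum; converges absolutely for |z| < 1). -/
noncomputable def hyp2F1 (a b c z : ℝ) : ℝ :=
  ∑' n : ℕ, ((ascPochhammer ℝ n).eval a * (ascPochhammer ℝ n).eval b /
      (ascPochhammer ℝ n).eval c) * z ^ n / (Nat.factorial n)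

noncomputable def α (p : ℝ) : ℝ := p ^ 3 * (2 + p) / (1 + 2 * p)

noncomputable def β (p : ℝ) : ℝ := 27 * p ^ 2 * (1 + p) ^ 2 / (4 * (1 + p + p ^ 2) ^ 3)

noncomputable def γ (p : ℝ) : ℝ := (1 + p + p ^ 2) / Real.sqrt (1 + 2 * p)

noncomputable def pStar : ℝ := (-1 + Real.sqrt (2 * Real.sqrt 3) - Real.sqrt 3) / 2

open FormalMultilinearSeries Metric Set Filter Topology

section PowerSeries

variable {𝕜 : Type*} [NontriviallyNormedField 𝕜]

theorem hasFPowerSeriesOnBall_deriv [CompleteSpace 𝕜] {f : 𝕜 → 𝕜}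
    {p : FormalMultilinearSeries 𝕜 𝕜 𝕜} {x : 𝕜} {r : ENNReal} (hf : HasFPowerSeriesOnBall f p x r) :
    HasFPowerSeriesOnBall (deriv f) (ofScalars 𝕜 fun n : ℕ ↦ (n + 1) * p.coeff (n + 1)) x r := by
  have hseries : (ofScalars 𝕜 fun n : ℕ ↦ (n + 1) * p.coeff (n + 1)) =
      (ContinuousLinearMap.apply 𝕜 𝕜 (1 : 𝕜)).compFormalMultilinearSeries p.derivSeries := by
    ext n
    simp [ofScalars]
  exact hseries ▸ (ContinuousLinearMap.apply 𝕜 𝕜 (1 : 𝕜)).comp_hasFPowerSeriesOnBall hf.fderiv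

theorem hasSum_coeff_mul_pow {f : 𝕜 → 𝕜} {p : FormalMultilinearSeries 𝕜 𝕜 𝕜} {r : ENNReal}
    (hf : HasFPowerSeriesOnBall f p 0 r) {z : 𝕜} (hz : z ∈ eball 0 r) :
    HasSum (fun n ↦ p.coeff n * z ^ n) (f z) := by
  simpa [mul_comm] using hf.hasSum hz

theorem hasSum_natCast_mul_of_succ {u : ℕ → 𝕜} {z S : 𝕜}
    (h : HasSum (fun n : ℕ ↦ (n + 1) * u (n + 1) * z ^ n) S) :
    HasSum (fun n : ℕ ↦ n * u n * z ^ n) (z * S) := by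
  rw [← hasSum_nat_add_iff' 1]
  simpa [pow_succ', mul_left_comm z] using h.mul_left z

end PowerSeries

section Hypergeometric

variable {𝕜 : Type*} [RCLike 𝕜] {a b c : 𝕜}

theorem one_le_radius_ordinaryHypergeometricSeries (a b c : 𝕜) :
    1 ≤ (ordinaryHypergeometricSeries 𝕜 a b c).radius := by
  by_cases habc : ∀ k : ℕ, (k : 𝕜) ≠ -a ∧ (k : 𝕜) ≠ -b ∧ (k : 𝕜) ≠ -c
  · exact (ordinaryHypergeometricSeries_radius_eq_one 𝕜 a b c habc).ge
  · obtain ⟨k, hk⟩ : ∃ k : ℕ, (k : 𝕜) = -a ∨ (k : 𝕜) = -b ∨ (k : 𝕜) = -c := by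
      by_contra! h
      exact habc h
    rw [radius_eq_top_of_forall_image_add_eq_zero _ (k + 1) fun n ↦
      ordinaryHypergeometricSeries_eq_zero_of_neg_nat a b c hk (by omega)]
    exact le_top

theorem hasFPowerSeriesOnBall_ordinaryHypergeometric (a b c : 𝕜) :
    HasFPowerSeriesOnBall (₂F₁ a b c) (ordinaryHypergeometricSeries 𝕜 a b c) 0 1 :=
  have h := one_le_radius_ordinaryHypergeometricSeries a b c
  ((ordinaryHypergeometricSeries 𝕜 a b c).hasFPowerSeriesOnBall (one_pos.trans_le h)).mono
    one_pos h

theorem ordinaryHypergeometricCoefficient_succ (hc : ∀ k : ℕ, (k : 𝕜) ≠ -c) (n : ℕ) :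
    (n + 1) * (n + c) * ordinaryHypergeometricCoefficient a b c (n + 1) =
      (n + a) * (n + b) * ordinaryHypergeometricCoefficient a b c n := by
  have hn : (n : 𝕜) + 1 ≠ 0 := n.cast_add_one_ne_zero
  have hcn : c + n ≠ 0 := fun h ↦ hc n (eq_neg_of_add_eq_zero_right h)
  simp only [ordinaryHypergeometricCoefficient, ascPochhammer_succ_eval, Nat.factorial_succ,
    Nat.cast_mul, Nat.cast_add_one, mul_inv]
  field_simp
  ring

theorem ordinaryHypergeometric_ode (hc : ∀ k : ℕ, (k : 𝕜) ≠ -c) {z : 𝕜} (hz : z ∈ ball 0 1) :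
    z * (1 - z) * deriv (deriv (₂F₁ a b c)) z + (c - (a + b + 1) * z) * deriv (₂F₁ a b c) z =
      a * b * ₂F₁ a b c z := by
  set f := ordinaryHypergeometricCoefficient a b c
  have hball : z ∈ eball (0 : 𝕜) 1 := by rwa [← ENNReal.ofReal_one, eball_ofReal]
  have hF := hasFPowerSeriesOnBall_ordinaryHypergeometric a b c
  have hF' := hasFPowerSeriesOnBall_deriv hF
  have hcoeff (n : ℕ) : (ordinaryHypergeometricSeries 𝕜 a b c).coeff n = f n := coeff_ofScalars
  have hsum := hasSum_coeff_mul_pow hF hball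
  have hsum' := hasSum_coeff_mul_pow hF' hball
  have hsum'' := hasSum_coeff_mul_pow (hasFPowerSeriesOnBall_deriv hF') hball
  simp only [coeff_ofScalars, hcoeff] at hsum hsum' hsum''
  have hθ : HasSum (fun n : ℕ ↦ n * f n * z ^ n) (z * deriv (₂F₁ a b c) z) :=
    hasSum_natCast_mul_of_succ hsum'
  have hshift : HasSum (fun n : ℕ ↦ n * ((n + 1) * f (n + 1)) * z ^ n)
      (z * deriv (deriv (₂F₁ a b c)) z) :=
    hasSum_natCast_mul_of_succ (u := fun n ↦ (n + 1) * f (n + 1)) (by simpa using hsum'')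
  have hθθ : HasSum (fun n : ℕ ↦ n * ((n - 1) * f n) * z ^ n)
      (z * (z * deriv (deriv (₂F₁ a b c)) z)) :=
    hasSum_natCast_mul_of_succ (u := fun n ↦ (n - 1) * f n) (by simpa [mul_left_comm] using hshift)
  have hlhs := hshift.add (hsum'.mul_left c)
  have hrhs := hθθ.add ((hθ.mul_left (a + b + 1)).add (hsum.mul_left (a * b)))
  have heq := hlhs.unique <| hrhs.congr_fun fun n ↦ by
    linear_combination z ^ n * ordinaryHypergeometricCoefficient_succ (a := a) (b := b) hc n
  linear_combination heq

end Hypergeometric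

theorem one_le_ordinaryHypergeometric {a b c x : ℝ} (ha : 0 < a) (hb : 0 < b) (hc : 0 < c)
    (hx0 : 0 ≤ x) (hx1 : x < 1) : 1 ≤ ₂F₁ a b c x := by
  have hball : x ∈ eball (0 : ℝ) 1 := by
    rwa [← ENNReal.ofReal_one, eball_ofReal, mem_ball_zero_iff, norm_of_nonneg hx0]
  have hsum := (hasFPowerSeriesOnBall_ordinaryHypergeometric a b c).hasSum hball
  simp_rw [zero_add, ordinaryHypergeometricSeries_apply_eq, smul_eq_mul] at hsum
  simpa using le_hasSum hsum 0 fun n _ ↦ by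
    have := ascPochhammer_pos n a ha
    have := ascPochhammer_pos n b hb
    have := ascPochhammer_pos n c hc
    positivity

theorem eq_of_hasDerivAt_zero {f : ℝ → ℝ} {a b : ℝ} (hc : ContinuousOn f (uIcc a b))
    (hd : ∀ x ∈ uIoo a b, HasDerivAt f 0 x) : f a = f b := by
  wlog hab : a < b generalizing a b
  · rcases (not_lt.1 hab).eq_or_lt with rfl | hba
    · rfl
    · exact (this (uIcc_comm a b ▸ hc) (uIoo_comm a b ▸ hd) hba).symm
  rw [uIcc_of_lt hab] at hc
  rw [uIoo_of_lt hab] at hd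
  obtain ⟨x, hx, hslope⟩ := exists_deriv_eq_slope f hab hc fun x hx ↦
    (hd x hx).differentiableAt.differentiableWithinAt
  rw [(hd x hx).deriv, eq_div_iff (sub_pos.2 hab).ne', zero_mul, eq_comm, sub_eq_zero] at hslope
  exact hslope.symm

/-- `y` solves the Sturm–Liouville equation `(P y')' = Q y` on `s`. Only `y` and its flux `P y'` are
required to be differentiable, which keeps the notion meaningful at zeros of `P`. -/
structure IsSturmLiouvilleSolutionOn {𝕜 : Type*} [NontriviallyNormedField 𝕜] (P Q y : 𝕜 → 𝕜)
    (s : Set 𝕜) : Prop where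
  differentiableAt : ∀ x ∈ s, DifferentiableAt 𝕜 y x
  hasDerivAt_flux : ∀ x ∈ s, HasDerivAt (fun t ↦ P t * deriv y t) (Q x * y x) x

namespace IsSturmLiouvilleSolutionOn

section NontriviallyNormedField

variable {𝕜 : Type*} [NontriviallyNormedField 𝕜] {P Q y : 𝕜 → 𝕜} {s : Set 𝕜}

theorem const_mul (hy : IsSturmLiouvilleSolutionOn P Q y s) (k : 𝕜) :
    IsSturmLiouvilleSolutionOn (fun x ↦ k * P x) (fun x ↦ k * Q x) y s where
  differentiableAt := hy.differentiableAt
  hasDerivAt_flux x hx := by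
    simpa only [mul_assoc] using (hy.hasDerivAt_flux x hx).const_mul k

-- Liouville's simultaneous change of the independent and the dependent variable.
theorem mul_comp {p q f φ φ' g g' R : 𝕜 → 𝕜} {t : Set 𝕜}
    (hf : IsSturmLiouvilleSolutionOn p q f t) (hs : IsOpen s) (hst : MapsTo φ s t)
    (hφ : ∀ x ∈ s, HasDerivAt φ (φ' x) x) (hg : ∀ x ∈ s, HasDerivAt g (g' x) x)
    (hR : ∀ x ∈ s, HasDerivAt (fun t ↦ P t * g' t) (R x) x) (hg0 : ∀ x ∈ s, g x ≠ 0)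
    (hp : ∀ x ∈ s, P x * g x ^ 2 * φ' x = p (φ x))
    (hq : ∀ x ∈ s, g x * R x + q (φ x) * φ' x = Q x * g x ^ 2) :
    IsSturmLiouvilleSolutionOn P Q (fun x ↦ g x * f (φ x)) s := by
  have hfφ : ∀ x ∈ s, HasDerivAt (fun x ↦ f (φ x)) (deriv f (φ x) * φ' x) x := fun x hx ↦
    (hf.differentiableAt _ (hst hx)).hasDerivAt.comp x (hφ x hx)
  have hy : ∀ x ∈ s, HasDerivAt (fun x ↦ g x * f (φ x))
      (g' x * f (φ x) + g x * (deriv f (φ x) * φ' x)) x := fun x hx ↦ (hg x hx).fun_mul (hfφ x hx)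
  refine ⟨fun x hx ↦ (hy x hx).differentiableAt, fun x hx ↦ ?_⟩
  have hflux : (fun x ↦ P x * deriv (fun x ↦ g x * f (φ x)) x) =ᶠ[𝓝 x]
      fun x ↦ P x * g' x * f (φ x) + p (φ x) * deriv f (φ x) / g x := by
    filter_upwards [hs.mem_nhds hx] with w hw
    rw [(hy w hw).deriv, ← hp w hw]
    field [hg0 w hw]
  have hpf : HasDerivAt (fun x ↦ p (φ x) * deriv f (φ x)) (q (φ x) * f (φ x) * φ' x) x :=
    (hf.hasDerivAt_flux _ (hst hx)).comp x (hφ x hx)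
  refine (((hR x hx).fun_mul (hfφ x hx)).fun_add
    (hpf.fun_div (hg x hx) (hg0 x hx))).congr_of_eventuallyEq hflux |>.congr_deriv ?_
  have hgx := hg0 x hx
  rw [← hp x hx]
  field_simp
  linear_combination f (φ x) * hq x hx

end NontriviallyNormedField

section Real

variable {P Q u v : ℝ → ℝ} {s : Set ℝ} {x₀ x : ℝ}

theorem leading_mul_wronskian_eq_zero (hu : IsSturmLiouvilleSolutionOn P Q u s)
    (hv : IsSturmLiouvilleSolutionOn P Q v s) (hs : IsOpen s) (hs' : IsPreconnected s)
    (hx₀ : x₀ ∈ s) (hP : P x₀ = 0) (hx : x ∈ s) :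
    P x * (deriv v x * u x - v x * deriv u x) = 0 := by
  set W : ℝ → ℝ := fun t ↦ u t * (P t * deriv v t) - v t * (P t * deriv u t)
  have hW : ∀ t ∈ s, HasDerivAt W 0 t := fun t ht ↦
    (((hu.differentiableAt t ht).hasDerivAt.fun_mul (hv.hasDerivAt_flux t ht)).fun_sub
      ((hv.differentiableAt t ht).hasDerivAt.fun_mul (hu.hasDerivAt_flux t ht))).congr_deriv
      (by ring)
  have hconst : W x = W x₀ := hs.is_const_of_deriv_eq_zero hs'
    (fun t ht ↦ (hW t ht).differentiableAt.differentiableWithinAt) (fun t ht ↦ (hW t ht).deriv)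
    hx hx₀
  simp only [W, hP] at hconst
  linear_combination hconst

theorem div_eq_div (hu : IsSturmLiouvilleSolutionOn P Q u s)
    (hv : IsSturmLiouvilleSolutionOn P Q v s) (hs : IsOpen s) (hs' : IsPreconnected s)
    (hx₀ : x₀ ∈ s) (hP : P x₀ = 0) (hP' : ∀ t ∈ s, t ≠ x₀ → P t ≠ 0) (hu0 : ∀ t ∈ s, u t ≠ 0)
    (hx : x ∈ s) : v x / u x = v x₀ / u x₀ := by
  have hquot : ∀ t ∈ s, HasDerivAt (fun t ↦ v t / u t)
      ((deriv v t * u t - v t * deriv u t) / u t ^ 2) t := fun t ht ↦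
    (hv.differentiableAt t ht).hasDerivAt.fun_div (hu.differentiableAt t ht).hasDerivAt (hu0 t ht)
  have hsub : uIcc x x₀ ⊆ s := hs'.ordConnected.uIcc_subset hx hx₀
  refine eq_of_hasDerivAt_zero (f := fun t ↦ v t / u t)
    (fun t ht ↦ (hquot t (hsub ht)).continuousAt.continuousWithinAt) fun t ht ↦ ?_
  have hts : t ∈ s := hsub (uIoo_subset_uIcc_self ht)
  have htx₀ : t ≠ x₀ := by
    rintro rfl
    simp at ht
  have hW := (mul_eq_zero.1 (hu.leading_mul_wronskian_eq_zero hv hs hs' hx₀ hP hts)).resolve_left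
    (hP' t hts htx₀)
  simpa only [hW, zero_div] using hquot t hts

end Real

end IsSturmLiouvilleSolutionOn

theorem isSturmLiouvilleSolutionOn_ordinaryHypergeometric {𝕜 : Type*} [RCLike 𝕜] {a b : 𝕜}
    (hab : a + b = 1) :
    IsSturmLiouvilleSolutionOn (fun z ↦ z * (1 - z)) (fun _ ↦ a * b) (₂F₁ a b (1 : 𝕜))
      (ball (0 : 𝕜) 1) := by
  have hF : AnalyticOnNhd 𝕜 (₂F₁ a b (1 : 𝕜)) (ball (0 : 𝕜) 1) := by
    rw [← eball_ofReal, ENNReal.ofReal_one]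
    exact (hasFPowerSeriesOnBall_ordinaryHypergeometric a b 1).analyticOnNhd
  refine ⟨fun z hz ↦ (hF z hz).differentiableAt, fun z hz ↦ ?_⟩
  have hc (k : ℕ) : (k : 𝕜) ≠ -1 := fun h ↦ k.cast_add_one_ne_zero (eq_neg_iff_add_eq_zero.1 h)
  have hode := ordinaryHypergeometric_ode (a := a) (b := b) hc hz
  refine (((hasDerivAt_id' z).fun_mul ((hasDerivAt_id' z).const_sub 1)).fun_mul
    (hF z hz).deriv.differentiableAt.hasDerivAt).congr_deriv ?_
  rw [hab] at hode
  linear_combination hode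

theorem hyp2F1_eq_ordinaryHypergeometric (a b c : ℝ) : hyp2F1 a b c = ₂F₁ a b c := by
  ext z
  rw [ordinaryHypergeometric_eq_tsum]
  exact tsum_congr fun n ↦ by rw [smul_eq_mul]; ring

section RBBG

variable {p : ℝ}

theorem one_add_self_add_sq_pos (p : ℝ) : 0 < 1 + p + p ^ 2 := by nlinarith [sq_nonneg (p + 1 / 2)]

theorem neg_one_half_lt_pStar : -1 / 2 < pStar := by
  have : √3 < √(2 * √3) := sqrt_lt_sqrt (by norm_num) <| by
    nlinarith [sq_sqrt (zero_le_three (α := ℝ)), sqrt_nonneg 3]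
  unfold pStar
  linarith

theorem pStar_neg : pStar < 0 := by
  have : √(2 * √3) < 1 + √3 := by
    rw [sqrt_lt' (by positivity)]
    nlinarith [sq_sqrt (zero_le_three (α := ℝ))]
  unfold pStar
  linarith

theorem one_add_two_mul_pos (hp : pStar < p) : 0 < 1 + 2 * p := by
  linarith [neg_one_half_lt_pStar]

theorem pStar_quartic_pos (hp : pStar < p) : 0 < p ^ 4 + 2 * p ^ 3 + 2 * p + 1 := by
  have h3 : √3 ^ 2 = 3 := sq_sqrt zero_le_three
  have ht : √(2 * √3) ^ 2 = 2 * √3 := sq_sqrt (by positivity)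
  have hfactor : p ^ 4 + 2 * p ^ 3 + 2 * p + 1 =
      (p - pStar) * (p - (-1 - √(2 * √3) - √3) / 2) * (p ^ 2 + (1 - √3) * p + 1) := by
    unfold pStar
    linear_combination (1 / 4) * (p ^ 2 + (1 - √3) * p + 1) * (ht - h3) + p ^ 2 * h3
  have hother : (-1 - √(2 * √3) - √3) / 2 ≤ pStar := by
    unfold pStar
    linarith [sqrt_nonneg (2 * √3)]
  have hcomplex : 0 < p ^ 2 + (1 - √3) * p + 1 := by
    nlinarith [sq_nonneg (p + (1 - √3) / 2), sqrt_nonneg 3]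
  rw [hfactor]
  exact mul_pos (mul_pos (sub_pos.2 hp) (sub_pos.2 (hother.trans_lt hp))) hcomplex

theorem abs_α_lt_one (hp : p ∈ Ioo pStar 1) : |α p| < 1 := by
  have hd := one_add_two_mul_pos hp.1
  have hp' : 0 < 1 + p := by linarith
  rw [α, abs_lt, lt_div_iff₀ hd, div_lt_iff₀ hd]
  constructor
  · linarith [pStar_quartic_pos hp.1]
  · linarith [mul_pos (sub_pos.2 hp.2) (pow_pos hp' 3)]

theorem β_nonneg (p : ℝ) : 0 ≤ β p := by
  have := one_add_self_add_sq_pos p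
  unfold β
  positivity

theorem one_sub_β (p : ℝ) :
    1 - β p = ((1 - p) * (2 + p) * (1 + 2 * p)) ^ 2 / (4 * (1 + p + p ^ 2) ^ 3) := by
  have := one_add_self_add_sq_pos p
  unfold β
  field_simp
  ring

theorem β_lt_one (hp : p ∈ Ioo pStar 1) : β p < 1 := by
  have hd := one_add_two_mul_pos hp.1
  have := one_add_self_add_sq_pos p
  have h1 : 0 < 1 - p := sub_pos.2 hp.2
  have h2 : 0 < 2 + p := by linarith
  rw [← sub_pos, one_sub_β]
  positivity

theorem γ_sq (hp : 0 < 1 + 2 * p) : γ p ^ 2 = (1 + p + p ^ 2) ^ 2 / (1 + 2 * p) := by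
  rw [γ, div_pow, sq_sqrt hp.le]

theorem hasDerivAt_one_add_self_add_sq (p : ℝ) :
    HasDerivAt (fun q : ℝ ↦ 1 + q + q ^ 2) (1 + 2 * p) p := by
  simpa using ((hasDerivAt_id' p).const_add 1).fun_add (hasDerivAt_pow 2 p)

theorem hasDerivAt_one_add_two_mul (p : ℝ) : HasDerivAt (fun q : ℝ ↦ 1 + 2 * q) 2 p := by
  simpa using ((hasDerivAt_id' p).const_mul 2).const_add 1

theorem hasDerivAt_α (hp : 1 + 2 * p ≠ 0) :
    HasDerivAt α (6 * p ^ 2 * (1 + p) ^ 2 / (1 + 2 * p) ^ 2) p := by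
  refine (((hasDerivAt_pow 3 p).fun_mul ((hasDerivAt_id' p).const_add 2)).fun_div
    (hasDerivAt_one_add_two_mul p) hp).congr_deriv ?_
  field_simp
  ring

theorem hasDerivAt_β (p : ℝ) : HasDerivAt β
    (27 * p * (1 + p) * (1 - p) * (2 + p) * (1 + 2 * p) / (4 * (1 + p + p ^ 2) ^ 4)) p := by
  have hS := one_add_self_add_sq_pos p
  refine ((((hasDerivAt_pow 2 p).const_mul 27).fun_mul
    (((hasDerivAt_id' p).const_add 1).fun_pow 2)).fun_div
    (((hasDerivAt_one_add_self_add_sq p).fun_pow 3).const_mul 4) (by positivity)).congr_deriv ?_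
  field_simp
  ring

theorem hasDerivAt_γ (hp : 0 < 1 + 2 * p) :
    HasDerivAt γ (γ p * (3 * p * (1 + p) / ((1 + p + p ^ 2) * (1 + 2 * p)))) p := by
  have hS := one_add_self_add_sq_pos p
  have hd := sqrt_pos.2 hp
  refine ((hasDerivAt_one_add_self_add_sq p).fun_div
    ((hasDerivAt_one_add_two_mul p).sqrt hp.ne') hd.ne').congr_deriv ?_
  rw [γ]
  field_simp
  rw [sq_sqrt hp.le]
  ring

/-- The leading coefficient `P = 4 β (1 - β) / β'` of the Sturm–Liouville equation `(P y')' = Q y`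
satisfied, as functions of `p`, by both sides of the RBBG formula; it is written in cancelled form
so that it is smooth at the zeros of `β'`. -/
noncomputable def rbbgLeading (p : ℝ) : ℝ :=
  p * (1 + p) * (1 - p) * (2 + p) * (1 + 2 * p) / (1 + p + p ^ 2) ^ 2

/-- The coefficient `Q = (8 / 9) β'` of the Sturm–Liouville equation `(P y')' = Q y` satisfied, as
functions of `p`, by both sides of the RBBG formula. -/
noncomputable def rbbgPotential (p : ℝ) : ℝ :=
  6 * p * (1 + p) * (1 - p) * (2 + p) * (1 + 2 * p) / (1 + p + p ^ 2) ^ 4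

theorem rbbgLeading_ne_zero (hp : p ∈ Ioo pStar 1) (hp0 : p ≠ 0) : rbbgLeading p ≠ 0 := by
  have hd := one_add_two_mul_pos hp.1
  have := one_add_self_add_sq_pos p
  have h1 : 0 < 1 - p := sub_pos.2 hp.2
  have h2 : 0 < 2 + p := by linarith
  have h3 : 0 < 1 + p := by linarith
  unfold rbbgLeading
  positivity

theorem hasDerivAt_rbbgLeading_mul_deriv_γ (hp : 0 < 1 + 2 * p) :
    HasDerivAt
      (fun q ↦ rbbgLeading q * (γ q * (3 * q * (1 + q) / ((1 + q + q ^ 2) * (1 + 2 * q)))))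
      (γ p * (3 * p * (1 + p) * (2 * (1 - p) * (2 + p) * (1 + 2 * p) ^ 2 -
        3 * p * (1 + p) * (1 + p + p ^ 2) ^ 2) / ((1 + p + p ^ 2) ^ 4 * (1 + 2 * p)))) p := by
  have hS := one_add_self_add_sq_pos p
  have hx := hasDerivAt_id' p
  have hp' : HasDerivAt (fun q : ℝ ↦ q * (1 + q)) (1 + 2 * p) p :=
    (hx.fun_mul (hx.const_add 1)).congr_deriv (by ring)
  have hrat : HasDerivAt
      (fun q : ℝ ↦ 3 * (q * (1 + q)) ^ 2 * (2 - q * (1 + q)) / (1 + q + q ^ 2) ^ 3) _ p :=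
    (((hp'.fun_pow 2).const_mul 3).fun_mul (hp'.const_sub 2)).fun_div
      ((hasDerivAt_one_add_self_add_sq p).fun_pow 3) (by positivity)
  -- In terms of `x = q (1 + q)`, `1 + q + q ^ 2 = 1 + x` and `(1 - q) (2 + q) = 2 - x`.
  have heq : (fun q ↦ rbbgLeading q * (γ q * (3 * q * (1 + q) / ((1 + q + q ^ 2) * (1 + 2 * q)))))
      =ᶠ[𝓝 p] fun q ↦ γ q * (3 * (q * (1 + q)) ^ 2 * (2 - q * (1 + q)) / (1 + q + q ^ 2) ^ 3) := by
    filter_upwards [(hasDerivAt_one_add_two_mul p).continuousAt.eventually_ne hp.ne'] with q hq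
    have hS' := one_add_self_add_sq_pos q
    have hq' : 1 + q * 2 ≠ 0 := mul_comm 2 q ▸ hq
    unfold rbbgLeading
    field_simp
    ring
  refine (((hasDerivAt_γ hp).fun_mul hrat).congr_of_eventuallyEq heq).congr_deriv ?_
  field_simp
  ring

theorem isSturmLiouvilleSolutionOn_hypergeometric_β :
    IsSturmLiouvilleSolutionOn rbbgLeading rbbgPotential (fun p ↦ ₂F₁ (1 / 3) (2 / 3) (1 : ℝ) (β p))
      (Ioo pStar 1) := by
  have hF : IsSturmLiouvilleSolutionOn _ _ (₂F₁ (1 / 3) (2 / 3) (1 : ℝ)) (ball (0 : ℝ) 1) :=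
    (isSturmLiouvilleSolutionOn_ordinaryHypergeometric (by norm_num)).const_mul 4
  simpa using hF.mul_comp (P := rbbgLeading) (Q := rbbgPotential) (g := fun _ ↦ 1)
    (g' := 0) (R := 0) isOpen_Ioo
    (fun p hp ↦ by simpa [abs_of_nonneg (β_nonneg p)] using β_lt_one hp)
    (fun p _ ↦ hasDerivAt_β p) (fun p _ ↦ hasDerivAt_const p 1)
    (fun p _ ↦ by simpa using hasDerivAt_const p (0 : ℝ)) (fun _ _ ↦ one_ne_zero)
    (fun p _ ↦ by
      have := one_add_self_add_sq_pos p
      rw [one_sub_β, rbbgLeading, β]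
      field)
    (fun p _ ↦ by
      have := one_add_self_add_sq_pos p
      rw [rbbgPotential]
      simp only [Pi.zero_apply]
      field)

theorem isSturmLiouvilleSolutionOn_γ_mul_hypergeometric_α :
    IsSturmLiouvilleSolutionOn rbbgLeading rbbgPotential
      (fun p ↦ γ p * ₂F₁ (1 / 2) (1 / 2) (1 : ℝ) (α p)) (Ioo pStar 1) := by
  have hF : IsSturmLiouvilleSolutionOn _ _ (₂F₁ (1 / 2) (1 / 2) (1 : ℝ)) (ball (0 : ℝ) 1) :=
    (isSturmLiouvilleSolutionOn_ordinaryHypergeometric (by norm_num)).const_mul 6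
  have hd : ∀ p ∈ Ioo pStar 1, 0 < 1 + 2 * p := fun p hp ↦ one_add_two_mul_pos hp.1
  refine hF.mul_comp isOpen_Ioo (fun p hp ↦ by simpa using abs_α_lt_one hp)
    (fun p hp ↦ hasDerivAt_α (hd p hp).ne') (fun p hp ↦ hasDerivAt_γ (hd p hp))
    (fun p hp ↦ hasDerivAt_rbbgLeading_mul_deriv_γ (hd p hp))
    (fun p hp ↦ div_ne_zero (one_add_self_add_sq_pos p).ne' (sqrt_pos.2 (hd p hp)).ne')
    (fun p hp ↦ ?_) (fun p hp ↦ ?_)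
  · have hS := one_add_self_add_sq_pos p
    have hdp := hd p hp
    have hdp' : 1 + p * 2 ≠ 0 := (mul_comm 2 p ▸ hdp).ne'
    rw [γ_sq hdp, rbbgLeading, α]
    field_simp
    ring
  · have hS := one_add_self_add_sq_pos p
    have hdp := hd p hp
    have hdp' : 1 + p * 2 ≠ 0 := (mul_comm 2 p ▸ hdp).ne'
    rw [← mul_assoc, ← sq, γ_sq hdp, rbbgPotential]
    field_simp
    ring

end RBBG

/-- Extended validity of the RBBG formula, lower branch. -/
theorem RBBG_extended_lower (p : ℝ) (hp0 : pStar < p) (hp1 : p < 1) :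
    hyp2F1 (1/3) (2/3) 1 (β p) = γ p * hyp2F1 (1/2) (1/2) 1 (α p) := by
  simp only [hyp2F1_eq_ordinaryHypergeometric]
  have hu : ∀ q ∈ Ioo pStar 1, ₂F₁ (1 / 3) (2 / 3) (1 : ℝ) (β q) ≠ 0 := fun q hq ↦
    (one_pos.trans_le <| one_le_ordinaryHypergeometric (by norm_num) (by norm_num) one_pos
      (β_nonneg q) (β_lt_one hq)).ne'
  have hp : p ∈ Ioo pStar 1 := ⟨hp0, hp1⟩
  have hratio := isSturmLiouvilleSolutionOn_hypergeometric_β.div_eq_div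
    isSturmLiouvilleSolutionOn_γ_mul_hypergeometric_α isOpen_Ioo isPreconnected_Ioo
    ⟨pStar_neg, one_pos⟩ (by simp [rbbgLeading]) (fun q hq ↦ rbbgLeading_ne_zero hq) hu hp
  have hα : α 0 = 0 := by simp [α]
  have hβ : β 0 = 0 := by simp [β]
  have hγ : γ 0 = 1 := by simp [γ]
  rw [hα, hβ, hγ, ordinaryHypergeometric_zero, ordinaryHypergeometric_zero, mul_one, div_one,
    div_eq_one_iff_eq (hu p hp)] at hratio
  exact hratio.symm
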